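/- Let k ≥ 3 be an integer. The number of canonical matrices A = (α_{ij}) ∈ Λ_{k+2}^k with α_{2,2} = 1 equals the number of canonical matrices in Λ_{k+1}^{k−1}; a bijection is given by changing the entry α_{2,2} from 1 to 0 and then deleting the first row and the first column of A. -/

import Mathlib

/-- `Lambda n k` : the set of `n×n` binary matrices with exactly `k` ones
in each row and each column. -/
def Lambda (n k : ℕ) : Set (Matrix (Fin n) (Fin n) Bool) :=
  {A | (∀ i, (Finset.univ.filter fun j => A i j = true).card = k) ∧
       (∀ j, (Finset.univ.filter fun i => A i j = true).card = k)}

/-- `A ∼ B` iff `A` is obtained from `B` by permuting rows and/or columns. -/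
def rcEquiv {n : ℕ} (A B : Matrix (Fin n) (Fin n) Bool) : Prop :=
  ∃ σ τ : Equiv.Perm (Fin n), ∀ i j, A i j = B (σ i) (τ j)

/-- `mu n k` : the number of equivalence classes of `Λ_n^k` under `∼`. -/
noncomputable def mu (n k : ℕ) : ℕ :=
  Nat.card (Quot fun A B : {M : Matrix (Fin n) (Fin n) Bool // M ∈ Lambda n k} =>
    rcEquiv A.1 B.1)

/-- The natural number whose `n`-digit binary representation is row `i` of `A`. -/
def rowVal {n : ℕ} (A : Matrix (Fin n) (Fin n) Bool) (i : Fin n) : ℕ :=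
  ∑ j : Fin n, if A i j = true then 2 ^ (n - 1 - (j : ℕ)) else 0

/-- A matrix is canonical when the row values of `A` and of `Aᵀ` are both
nondecreasing. -/
def IsCanonical {n : ℕ} (A : Matrix (Fin n) (Fin n) Bool) : Prop :=
  Monotone (rowVal A) ∧ Monotone (rowVal A.transpose)

/-- The number of `true` entries of a Boolean vector. -/
def countTrue {n : ℕ} (v : Fin n → Bool) : ℕ :=
  (Finset.univ.filter fun j => v j = true).card

/-- The natural number with binary digits `v`, most significant digit first. -/
def bitsVal {n : ℕ} (v : Fin n → Bool) : ℕ :=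
  ∑ j : Fin n, if v j = true then 2 ^ (n - 1 - (j : ℕ)) else 0

theorem countTrue_succ {n : ℕ} (v : Fin (n + 1) → Bool) :
    countTrue v = (if v 0 = true then 1 else 0) + countTrue fun j => v j.succ := by
  unfold countTrue
  rw [Fin.card_filter_univ_succ]
  split_ifs <;> simp [add_comm]

theorem countTrue_le {n : ℕ} (v : Fin n → Bool) : countTrue v ≤ n := by
  simpa [countTrue] using Finset.card_filter_le (Finset.univ : Finset (Fin n)) fun j => v j = true

theorem countTrue_of_forall {n : ℕ} {v : Fin n → Bool} (h : ∀ j, v j = true) :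
    countTrue v = n := by
  simp [countTrue, h]

theorem countTrue_two_le (n : ℕ) :
    countTrue (fun j : Fin (n + 2) => decide (2 ≤ (j : ℕ))) = n := by
  rw [countTrue_succ, countTrue_succ, countTrue_of_forall] <;> simp

theorem bitsVal_succ {n : ℕ} (v : Fin (n + 1) → Bool) :
    bitsVal v = (if v 0 = true then 2 ^ n else 0) + bitsVal fun j => v j.succ := by
  unfold bitsVal
  rw [Fin.sum_univ_succ]
  congr 1
  refine Finset.sum_congr rfl fun j _ => ?_
  have : n + 1 - 1 - (j.succ : ℕ) = n - 1 - (j : ℕ) := by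
    rw [Fin.val_succ]; omega
  rw [this]

theorem bitsVal_lt {n : ℕ} (v : Fin n → Bool) : bitsVal v < 2 ^ n := by
  induction n with
  | zero => simp [bitsVal]
  | succ n ih =>
    rw [bitsVal_succ, pow_succ]
    have := ih fun j => v j.succ
    split_ifs <;> omega

theorem bitsVal_le_of_head_eq {n : ℕ} {v w : Fin (n + 1) → Bool} (h : v 0 = w 0) :
    bitsVal v ≤ bitsVal w ↔ (bitsVal fun j => v j.succ) ≤ bitsVal fun j => w j.succ := by
  rw [bitsVal_succ v, bitsVal_succ w, h]
  omega

theorem bitsVal_le_of_head_lt {n : ℕ} {v w : Fin (n + 1) → Bool} (hv : v 0 = false)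
    (hw : w 0 = true) : bitsVal v ≤ bitsVal w := by
  rw [bitsVal_succ v, bitsVal_succ w, hv, hw]
  have := bitsVal_lt fun j => v j.succ
  simp
  omega

theorem head_le_of_bitsVal_le {n : ℕ} {v w : Fin (n + 1) → Bool} (h : bitsVal v ≤ bitsVal w) :
    v 0 ≤ w 0 := by
  rw [bitsVal_succ v, bitsVal_succ w] at h
  have := bitsVal_lt fun j => w j.succ
  cases hv : v 0 <;> cases hw : w 0 <;> simp_all
  omega

theorem two_pow_countTrue_le {n : ℕ} (v : Fin n → Bool) :
    2 ^ countTrue v ≤ bitsVal v + 1 := by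
  induction n with
  | zero => simp [bitsVal, countTrue]
  | succ n ih =>
    rw [bitsVal_succ, countTrue_succ]
    have h₁ := ih fun j => v j.succ
    have h₂ : 2 ^ (countTrue fun j => v j.succ) ≤ 2 ^ n :=
      Nat.pow_le_pow_right two_pos (countTrue_le _)
    split_ifs
    · rw [pow_add]; omega
    · simpa using h₁

theorem bitsVal_lt_two_pow_countTrue {n : ℕ} {v : Fin n → Bool} (hv : Monotone v) :
    bitsVal v < 2 ^ countTrue v := by
  induction n with
  | zero => simp [bitsVal]
  | succ n ih =>
    by_cases h : v 0 = true
    · rw [countTrue_of_forall fun j => Bool.eq_true_of_true_le (h ▸ hv (Fin.zero_le j))]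
      exact bitsVal_lt v
    · rw [bitsVal_succ, countTrue_succ]
      simpa [h] using ih fun i j hij => hv (Fin.succ_le_succ_iff.2 hij)

/-- A nondecreasing Boolean vector has the least value among vectors with as many ones. -/
theorem bitsVal_le_of_monotone {n : ℕ} {v w : Fin n → Bool} (hv : Monotone v)
    (h : countTrue v = countTrue w) : bitsVal v ≤ bitsVal w := by
  have h₁ := bitsVal_lt_two_pow_countTrue hv
  have h₂ := two_pow_countTrue_le w
  rw [h] at h₁
  omega

theorem eq_true_iff_of_monotone {n : ℕ} {v : Fin n → Bool} (hv : Monotone v) (j : Fin n) :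
    v j = true ↔ n ≤ j + countTrue v := by
  induction n with
  | zero => exact j.elim0
  | succ n ih =>
    by_cases h : v 0 = true
    · have hall : ∀ j, v j = true := fun j => Bool.eq_true_of_true_le (h ▸ hv (Fin.zero_le j))
      rw [countTrue_of_forall hall]
      simp [hall j]
    · rw [countTrue_succ]
      refine Fin.cases ?_ (fun j => ?_) j
      · have := countTrue_le fun j => v j.succ
        simp [h]
        omega
      · rw [ih (v := fun j => v j.succ) (fun i j hij => hv (Fin.succ_le_succ_iff.2 hij)) j]
        simp [h]
        omega

theorem monotone_zero_of_monotone_rowVal_transpose {n : ℕ}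
    {M : Matrix (Fin (n + 1)) (Fin (n + 1)) Bool} (h : Monotone (rowVal M.transpose)) :
    Monotone (M 0) :=
  fun _ _ hij => head_le_of_bitsVal_le (h hij)

theorem transpose_mem_Lambda {n k : ℕ} {A : Matrix (Fin n) (Fin n) Bool} (h : A ∈ Lambda n k) :
    A.transpose ∈ Lambda n k :=
  ⟨h.2, h.1⟩

theorem IsCanonical.transpose {n : ℕ} {A : Matrix (Fin n) (Fin n) Bool} (h : IsCanonical A) :
    IsCanonical A.transpose :=
  ⟨h.2, h.1⟩

theorem IsCanonical.zero_apply {n k : ℕ} {A : Matrix (Fin (n + 1)) (Fin (n + 1)) Bool}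
    (h : IsCanonical A) (hA : A ∈ Lambda (n + 1) k) (j : Fin (n + 1)) :
    A 0 j = decide (n + 1 ≤ j + k) := by
  have := eq_true_iff_of_monotone (monotone_zero_of_monotone_rowVal_transpose h.2) j
  rw [show countTrue (A 0) = k from hA.1 0] at this
  rw [Bool.eq_iff_iff, this, decide_eq_true_iff]

/-- Clear the entry at `(1, 1)` and delete the first row and the first column. -/
def clearDelete {k : ℕ} (A : Matrix (Fin (k + 2)) (Fin (k + 2)) Bool) :
    Matrix (Fin (k + 1)) (Fin (k + 1)) Bool :=
  Matrix.of fun i j => if i = 0 ∧ j = 0 then false else A i.succ j.succ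

/-- The first row and the first column are `0 0 1 ⋯ 1`, and the entry at `(1, 1)` is `1`. -/
structure IsBordered {k : ℕ} (A : Matrix (Fin (k + 2)) (Fin (k + 2)) Bool) : Prop where
  row : ∀ j, A 0 j = decide (2 ≤ (j : ℕ))
  col : ∀ i, A i 0 = decide (2 ≤ (i : ℕ))
  one_one : A 1 1 = true

theorem clearDelete_transpose {k : ℕ} (A : Matrix (Fin (k + 2)) (Fin (k + 2)) Bool) :
    clearDelete A.transpose = (clearDelete A).transpose := by
  ext i j
  simp only [clearDelete, Matrix.transpose_apply, Matrix.of_apply, and_comm]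

theorem clearDelete_of_ne {k : ℕ} (A : Matrix (Fin (k + 2)) (Fin (k + 2)) Bool)
    {i : Fin (k + 1)} (hi : i ≠ 0) : clearDelete A i = fun j => A i.succ j.succ := by
  ext j
  simp [clearDelete, hi]

namespace IsBordered

variable {k : ℕ} {A : Matrix (Fin (k + 2)) (Fin (k + 2)) Bool}

theorem transpose (h : IsBordered A) : IsBordered A.transpose :=
  ⟨h.col, h.row, h.one_one⟩

theorem of_isCanonical (hA : A ∈ Lambda (k + 2) k) (hc : IsCanonical A) (h : A 1 1 = true) :
    IsBordered A where
  row j := by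
    rw [hc.zero_apply hA j, decide_eq_decide]
    omega
  col i := by
    rw [← A.transpose_apply, hc.transpose.zero_apply (transpose_mem_Lambda hA) i,
      decide_eq_decide]
    omega
  one_one := h

theorem succ_zero (h : IsBordered A) {i : Fin (k + 1)} (hi : i ≠ 0) : A i.succ 0 = true := by
  have := Fin.val_ne_zero_iff.2 hi
  rw [h.col, decide_eq_true_iff, Fin.val_succ]
  omega

theorem monotone_zero (h : IsBordered A) : Monotone (A 0) := by
  intro i j hij
  rw [h.row, h.row, Bool.le_iff_imp]
  simp only [decide_eq_true_iff]
  have : (i : ℕ) ≤ j := hij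
  omega

theorem countTrue_zero (h : IsBordered A) : countTrue (A 0) = k := by
  rw [funext h.row, countTrue_two_le]

theorem countTrue_succ (h : IsBordered A) (i : Fin (k + 1)) :
    countTrue (A i.succ) = countTrue (clearDelete A i) + 1 := by
  rw [_root_.countTrue_succ]
  by_cases hi : i = 0
  · subst hi
    rw [_root_.countTrue_succ, _root_.countTrue_succ (clearDelete A 0)]
    simp [clearDelete, h.col, h.one_one, add_comm]
  · rw [clearDelete_of_ne A hi, h.succ_zero hi, if_pos rfl, add_comm]

theorem forall_countTrue_iff (h : IsBordered A) (hk : 1 ≤ k) :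
    (∀ i, countTrue (A i) = k) ↔ ∀ i, countTrue (clearDelete A i) = k - 1 := by
  rw [Fin.forall_fin_succ]
  simp only [h.countTrue_zero, h.countTrue_succ, true_and]
  refine forall_congr' fun i => ?_
  omega

theorem mem_Lambda_iff (h : IsBordered A) (hk : 1 ≤ k) :
    A ∈ Lambda (k + 2) k ↔ clearDelete A ∈ Lambda (k + 1) (k - 1) := by
  have h' := h.transpose.forall_countTrue_iff hk
  rw [clearDelete_transpose] at h'
  exact and_congr (h.forall_countTrue_iff hk) h'

theorem bitsVal_clearDelete_le_iff (h : IsBordered A) {i j : Fin (k + 1)} (hi : i ≠ 0)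
    (hj : j ≠ 0) :
    bitsVal (clearDelete A i) ≤ bitsVal (clearDelete A j) ↔
      bitsVal (A i.succ) ≤ bitsVal (A j.succ) := by
  rw [bitsVal_le_of_head_eq ((h.succ_zero hi).trans (h.succ_zero hj).symm),
    clearDelete_of_ne A hi, clearDelete_of_ne A hj]

theorem monotone_clearDelete_zero (h : IsBordered A) (hc : Monotone (rowVal A.transpose)) :
    Monotone (clearDelete A 0) := by
  intro i j hij
  by_cases hi : i = 0
  · subst hi
    simp [clearDelete]
  · have hj : j ≠ 0 := fun hj => hi (Fin.le_zero_iff.1 (hj ▸ hij))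
    have := (h.transpose.bitsVal_clearDelete_le_iff hi hj).2 (hc (Fin.succ_le_succ_iff.2 hij))
    rw [clearDelete_transpose] at this
    exact head_le_of_bitsVal_le this

theorem monotone_rowVal_iff (h : IsBordered A) (hk : 1 ≤ k) (hA : A ∈ Lambda (k + 2) k)
    (h₀ : Monotone (clearDelete A 0)) :
    Monotone (rowVal A) ↔ Monotone (rowVal (clearDelete A)) := by
  have hB := (h.mem_Lambda_iff hk).1 hA
  constructor
  · intro hm i j hij
    by_cases hi : i = 0
    · subst hi
      exact bitsVal_le_of_monotone h₀ ((hB.1 0).trans (hB.1 j).symm)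
    · have hj : j ≠ 0 := fun hj => hi (Fin.le_zero_iff.1 (hj ▸ hij))
      exact (h.bitsVal_clearDelete_le_iff hi hj).2 (hm (Fin.succ_le_succ_iff.2 hij))
  · intro hm i j hij
    rcases Fin.eq_zero_or_eq_succ i with rfl | ⟨i, rfl⟩
    · exact bitsVal_le_of_monotone h.monotone_zero ((hA.1 0).trans (hA.1 j).symm)
    rcases Fin.eq_zero_or_eq_succ j with rfl | ⟨j, rfl⟩
    · exact absurd hij (by simp)
    rw [Fin.succ_le_succ_iff] at hij
    by_cases hj : j = 0
    · subst hj
      rw [Fin.le_zero_iff.1 hij]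
    by_cases hi : i = 0
    · subst hi
      exact bitsVal_le_of_head_lt (by simp [h.col]) (h.succ_zero hj)
    · exact (h.bitsVal_clearDelete_le_iff hi hj).1 (hm hij)

theorem isCanonical_iff (h : IsBordered A) (hk : 1 ≤ k) (hA : A ∈ Lambda (k + 2) k) :
    IsCanonical A ↔ IsCanonical (clearDelete A) := by
  have key := h.monotone_rowVal_iff hk hA
  have key' := h.transpose.monotone_rowVal_iff hk (transpose_mem_Lambda hA)
  rw [clearDelete_transpose] at key'
  constructor
  · intro hc
    have h₀ := h.transpose.monotone_clearDelete_zero hc.1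
    rw [clearDelete_transpose] at h₀
    exact ⟨(key (h.monotone_clearDelete_zero hc.2)).1 hc.1, (key' h₀).1 hc.2⟩
  · intro hc
    exact ⟨(key (monotone_zero_of_monotone_rowVal_transpose hc.2)).2 hc.1,
      (key' (monotone_zero_of_monotone_rowVal_transpose hc.1)).2 hc.2⟩

theorem eq_of_clearDelete_eq {A' : Matrix (Fin (k + 2)) (Fin (k + 2)) Bool} (h : IsBordered A)
    (h' : IsBordered A') (heq : clearDelete A = clearDelete A') : A = A' := by
  ext i j
  rcases Fin.eq_zero_or_eq_succ i with rfl | ⟨i, rfl⟩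
  · rw [h.row, h'.row]
  rcases Fin.eq_zero_or_eq_succ j with rfl | ⟨j, rfl⟩
  · rw [h.col, h'.col]
  by_cases hij : i = 0 ∧ j = 0
  · obtain ⟨rfl, rfl⟩ := hij
    exact h.one_one.trans h'.one_one.symm
  · simpa only [clearDelete, Matrix.of_apply, if_neg hij] using congrFun (congrFun heq i) j

theorem exists_clearDelete_eq {B : Matrix (Fin (k + 1)) (Fin (k + 1)) Bool}
    (hB : B 0 0 = false) :
    ∃ A : Matrix (Fin (k + 2)) (Fin (k + 2)) Bool, IsBordered A ∧ clearDelete A = B := by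
  refine ⟨Matrix.of (Fin.cons (fun j => decide (2 ≤ (j : ℕ))) fun i =>
    Fin.cons (decide (2 ≤ (i.succ : ℕ))) fun j => if i = 0 ∧ j = 0 then true else B i j),
    ⟨fun j => rfl, fun i => ?_, ?_⟩, ?_⟩
  · refine Fin.cases ?_ (fun i => ?_) i <;> simp
  · rw [← Fin.succ_zero_eq_one]
    simp only [Matrix.of_apply, Fin.cons_succ]
    simp
  · ext i j
    by_cases hij : i = 0 ∧ j = 0
    · obtain ⟨rfl, rfl⟩ := hij
      simp [clearDelete, hB]
    · simp only [clearDelete, Matrix.of_apply, Fin.cons_succ, if_neg hij]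

end IsBordered

theorem bij_case_alpha22_one (k : ℕ) (hk : 3 ≤ k) :
    Set.BijOn
      (fun A : Matrix (Fin (k + 2)) (Fin (k + 2)) Bool =>
        Matrix.of fun i j : Fin (k + 1) =>
          if i = 0 ∧ j = 0 then false else A i.succ j.succ)
      {A | A ∈ Lambda (k + 2) k ∧ IsCanonical A ∧ A 1 1 = true}
      {B | B ∈ Lambda (k + 1) (k - 1) ∧ IsCanonical B} ∧
    Nat.card {A : Matrix (Fin (k + 2)) (Fin (k + 2)) Bool |
        A ∈ Lambda (k + 2) k ∧ IsCanonical A ∧ A 1 1 = true} =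
      Nat.card {B : Matrix (Fin (k + 1)) (Fin (k + 1)) Bool |
        B ∈ Lambda (k + 1) (k - 1) ∧ IsCanonical B} := by
  have hk₁ : 1 ≤ k := by omega
  have hbij : Set.BijOn (clearDelete (k := k))
      {A | A ∈ Lambda (k + 2) k ∧ IsCanonical A ∧ A 1 1 = true}
      {B | B ∈ Lambda (k + 1) (k - 1) ∧ IsCanonical B} := by
    refine ⟨?_, ?_, ?_⟩
    · rintro A ⟨hA, hc, h⟩
      have hb := IsBordered.of_isCanonical hA hc h
      exact ⟨(hb.mem_Lambda_iff hk₁).1 hA, (hb.isCanonical_iff hk₁ hA).1 hc⟩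
    · rintro A ⟨hA, hc, h⟩ A' ⟨hA', hc', h'⟩ heq
      exact (IsBordered.of_isCanonical hA hc h).eq_of_clearDelete_eq
        (IsBordered.of_isCanonical hA' hc' h') heq
    · rintro B ⟨hB, hc⟩
      have hB₀ : B 0 0 = false := by
        rw [hc.zero_apply hB, decide_eq_false_iff_not, Fin.val_zero]
        omega
      obtain ⟨A, hb, rfl⟩ := IsBordered.exists_clearDelete_eq hB₀
      have hA := (hb.mem_Lambda_iff hk₁).2 hB
      exact ⟨A, ⟨hA, (hb.isCanonical_iff hk₁ hA).2 hc, hb.one_one⟩, rfl⟩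
  exact ⟨hbij, Nat.card_congr (hbij.equiv _)⟩
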